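/- Let p, q > 0 and let r, s, θ ∈ ℝ with r ≠ −2. Let (u, v) be a positive classical solution of the Lane–Emden system −Δu = v^p, −Δv = u^q on ℝ^n. Then for every nonnegative φ ∈ C_c²(ℝ^n): ∫ u^r v^s |∇u|² φ ≥ (2θ/(r+2)) ∫ u^{r+q+2} v^{s−1} φ − (2θ/(r+2))(θ + s + θr/2 − 1) ∫ u^{r+2} v^{s−2} |∇v|² φ + I₃, where I₃ = −(2θ/(r+2)) ∫ u^{r+2} v^{s−1} (∇v·∇φ), all integrals being over ℝ^n. -/

import Mathlib

open MeasureTheory Real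
open scoped InnerProductSpace

/-- The Laplacian of a function `f : ℝⁿ → ℝ`, as the sum of its second partial
derivatives. -/
noncomputable def lap {n : ℕ} (f : EuclideanSpace ℝ (Fin n) → ℝ)
    (x : EuclideanSpace ℝ (Fin n)) : ℝ :=
  ∑ i : Fin n, fderiv ℝ (fun y => fderiv ℝ f y (EuclideanSpace.single i 1)) x
    (EuclideanSpace.single i 1)

/-!
Testing `-Δv` against `u ^ (r + 2) * v ^ (s - 1) * φ` and integrating by parts gives the integrals
of `|∇v|²` and `∇v · ∇φ`, plus `r + 2` times the cross term
`∫ u ^ (r + 1) * v ^ (s - 1) * (∇u · ∇v) * φ`. The cross term is controlled by expanding the square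
`0 ≤ u ^ r * v ^ (s - 2) * |v ∇u - θ u ∇v|² * φ`, as in Picone's inequality.
-/

open scoped Gradient Laplacian

section Gradient

variable {E : Type*} [NormedAddCommGroup E] [InnerProductSpace ℝ E] [CompleteSpace E]
  {f g : E → ℝ} {x : E}

theorem gradient_fun_mul (hf : DifferentiableAt ℝ f x) (hg : DifferentiableAt ℝ g x) :
    ∇ (fun y => f y * g y) x = f x • ∇ g x + g x • ∇ f x := by
  simp [gradient, fderiv_fun_mul hf hg]

theorem gradient_fun_rpow_const (a : ℝ) (hf : DifferentiableAt ℝ f x) (hx : f x ≠ 0) :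
    ∇ (fun y => f y ^ a) x = (a * f x ^ (a - 1)) • ∇ f x := by
  simp [gradient, (hf.hasFDerivAt.rpow_const (Or.inl hx)).fderiv]

theorem continuous_gradient (hf : ContDiff ℝ 1 f) : Continuous (∇ f) :=
  (LinearIsometryEquiv.continuous _).comp (hf.continuous_fderiv one_ne_zero)

theorem hasCompactSupport_gradient (hf : HasCompactSupport f) : HasCompactSupport (∇ f) :=
  (hf.fderiv (𝕜 := ℝ)).comp_left (map_zero _)

theorem inner_gradient_rpow_mul_rpow_mul {u v φ : E → ℝ} (w : E) (a b : ℝ)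
    (hu : DifferentiableAt ℝ u x) (hv : DifferentiableAt ℝ v x) (hφ : DifferentiableAt ℝ φ x)
    (hu0 : u x ≠ 0) (hv0 : v x ≠ 0) :
    ⟪w, ∇ (fun y => u y ^ a * v y ^ b * φ y) x⟫_ℝ =
      a * (u x ^ (a - 1) * v x ^ b * (⟪w, ∇ u x⟫_ℝ * φ x))
        + b * (u x ^ a * v x ^ (b - 1) * (⟪w, ∇ v x⟫_ℝ * φ x))
        + u x ^ a * v x ^ b * ⟪w, ∇ φ x⟫_ℝ := by
  have hua := hu.rpow_const (p := a) (Or.inl hu0)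
  have hvb := hv.rpow_const (p := b) (Or.inl hv0)
  rw [gradient_fun_mul (hua.fun_mul hvb) hφ, gradient_fun_mul hua hvb,
    gradient_fun_rpow_const a hu hu0, gradient_fun_rpow_const b hv hv0]
  simp only [inner_add_right, real_inner_smul_right]
  ring

end Gradient

theorem two_mul_rpow_mul_rpow_mul_inner_le {E : Type*} [NormedAddCommGroup E]
    [InnerProductSpace ℝ E] {a b : ℝ} (ha : 0 < a) (hb : 0 < b) (r s θ : ℝ) (x y : E) :
    2 * θ * (a ^ (r + 1) * b ^ (s - 1) * ⟪x, y⟫_ℝ)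
      ≤ a ^ r * b ^ s * ‖x‖ ^ 2 + θ ^ 2 * (a ^ (r + 2) * b ^ (s - 2) * ‖y‖ ^ 2) := by
  have weighted_square_nonneg : 0 ≤ a ^ r * b ^ (s - 2) * ‖b • x - (θ * a) • y‖ ^ 2 := by
    positivity
  have ha₁ : a ^ (r + 1) = a ^ r * a := rpow_add_one ha.ne' r
  have ha₂ : a ^ (r + 2) = a ^ r * a ^ 2 := mod_cast rpow_add_natCast ha.ne' r 2
  have hb₁ : b ^ (s - 1) = b ^ (s - 2) * b := by
    rw [← rpow_add_one hb.ne']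
    ring_nf
  have hb₂ : b ^ s = b ^ (s - 2) * b ^ 2 := by
    rw [← rpow_two, ← rpow_add hb, sub_add_cancel]
  rw [norm_sub_sq_real, norm_smul, norm_smul, real_inner_smul_left, real_inner_smul_right,
    mul_pow, mul_pow, norm_eq_abs, norm_eq_abs, sq_abs, sq_abs] at weighted_square_nonneg
  rw [ha₁, ha₂, hb₁, hb₂]
  linarith

section Laplacian

variable {E : Type*} [NormedAddCommGroup E] [InnerProductSpace ℝ E] [FiniteDimensional ℝ E]

theorem laplacian_eq_sum_fderiv_fderiv {ι : Type*} [Fintype ι] (b : OrthonormalBasis ι ℝ E)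
    {f : E → ℝ} {x : E} (hf : DifferentiableAt ℝ (fderiv ℝ f) x) :
    Δ f x = ∑ i, fderiv ℝ (fun y => fderiv ℝ f y (b i)) x (b i) := by
  simp [InnerProductSpace.laplacian_eq_iteratedFDeriv_orthonormalBasis f b,
    iteratedFDeriv_two_apply, fderiv_clm_apply hf (differentiableAt_const _)]

theorem lap_eq_laplacian {n : ℕ} {f : EuclideanSpace ℝ (Fin n) → ℝ}
    {x : EuclideanSpace ℝ (Fin n)} (hf : DifferentiableAt ℝ (fderiv ℝ f) x) :
    lap f x = Δ f x := by
  simp [lap, laplacian_eq_sum_fderiv_fderiv (EuclideanSpace.basisFun (Fin n) ℝ) hf]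

variable [MeasurableSpace E] [BorelSpace E] {μ : Measure E} [μ.IsAddHaarMeasure]

theorem integral_inner_gradient_eq_integral_neg_laplacian_mul {f g : E → ℝ}
    (hf : ContDiff ℝ 2 f) (hg : ContDiff ℝ 1 g) (hgc : HasCompactSupport g) :
    ∫ x, ⟪∇ f x, ∇ g x⟫_ℝ ∂μ = ∫ x, -Δ f x * g x ∂μ := by
  let b := stdOrthonormalBasis ℝ E
  have hDf : ContDiff ℝ 1 (fderiv ℝ f) := hf.fderiv_right (by norm_num)
  have hDfb (i) : ContDiff ℝ 1 (fun x => fderiv ℝ f x (b i)) := hDf.clm_apply contDiff_const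
  have hDDf_mul_g (i) :
      Integrable (fun x => fderiv ℝ (fun y => fderiv ℝ f y (b i)) x (b i) * g x) μ :=
    ((((hDfb i).continuous_fderiv one_ne_zero).clm_apply continuous_const).mul
      hg.continuous).integrable_of_hasCompactSupport hgc.mul_left
  have hDf_mul_Dg (i) : Integrable (fun x => fderiv ℝ f x (b i) * fderiv ℝ g x (b i)) μ :=
    ((hDfb i).continuous.mul ((hg.continuous_fderiv one_ne_zero).clm_apply
      continuous_const)).integrable_of_hasCompactSupport (hgc.fderiv_apply ℝ _).mul_left
  have hDf_mul_g (i) : Integrable (fun x => fderiv ℝ f x (b i) * g x) μ :=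
    ((hDfb i).continuous.mul hg.continuous).integrable_of_hasCompactSupport hgc.mul_left
  calc ∫ x, ⟪∇ f x, ∇ g x⟫_ℝ ∂μ
      = ∑ i, ∫ x, fderiv ℝ f x (b i) * fderiv ℝ g x (b i) ∂μ := by
        rw [← integral_finsetSum _ fun i _ => hDf_mul_Dg i]
        congr with x
        rw [← b.sum_inner_mul_inner]
        refine Finset.sum_congr rfl fun i _ => ?_
        rw [inner_gradient_left, inner_gradient_right, conj_trivial]
    _ = ∑ i, -∫ x, fderiv ℝ (fun y => fderiv ℝ f y (b i)) x (b i) * g x ∂μ :=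
        Finset.sum_congr rfl fun i _ =>
          integral_mul_fderiv_eq_neg_fderiv_mul_of_integrable (hDDf_mul_g i) (hDf_mul_Dg i)
            (hDf_mul_g i) (fun x _ => (hDfb i).differentiable one_ne_zero x)
            (fun x _ => hg.differentiable one_ne_zero x)
    _ = ∫ x, -Δ f x * g x ∂μ := by
        simp_rw [laplacian_eq_sum_fderiv_fderiv b (hDf.differentiable one_ne_zero _), neg_mul,
          Finset.sum_mul, integral_neg, integral_finsetSum _ fun i _ => hDDf_mul_g i,
          Finset.sum_neg_distrib]

end Laplacian

theorem integrable_rpow_mul_rpow_mul {X : Type*} [TopologicalSpace X] [MeasurableSpace X]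
    [OpensMeasurableSpace X] {μ : Measure X} [IsFiniteMeasureOnCompacts μ] {u v ψ : X → ℝ}
    (a b : ℝ) (hu : Continuous u) (hv : Continuous v) (hu0 : ∀ x, u x ≠ 0) (hv0 : ∀ x, v x ≠ 0)
    (hψ : Continuous ψ) (hψc : HasCompactSupport ψ) :
    Integrable (fun x => u x ^ a * v x ^ b * ψ x) μ :=
  (((hu.rpow_const fun x => Or.inl (hu0 x)).mul
    (hv.rpow_const fun x => Or.inl (hv0 x))).mul hψ).integrable_of_hasCompactSupport hψc.mul_left

section Picone

variable {E : Type*} [NormedAddCommGroup E] [InnerProductSpace ℝ E] [FiniteDimensional ℝ E]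
  [MeasurableSpace E] [BorelSpace E] {μ : Measure E} {u v φ : E → ℝ}

theorem integral_neg_laplacian_mul_rpow_mul_rpow_mul [μ.IsAddHaarMeasure] (a b : ℝ)
    (hu : ContDiff ℝ 1 u) (hv : ContDiff ℝ 2 v) (hu0 : ∀ x, u x ≠ 0) (hv0 : ∀ x, v x ≠ 0)
    (hφ : ContDiff ℝ 1 φ) (hφc : HasCompactSupport φ) :
    ∫ x, -Δ v x * (u x ^ a * v x ^ b * φ x) ∂μ
      = a * (∫ x, u x ^ (a - 1) * v x ^ b * (⟪∇ u x, ∇ v x⟫_ℝ * φ x) ∂μ)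
        + b * (∫ x, u x ^ a * v x ^ (b - 1) * (‖∇ v x‖ ^ 2 * φ x) ∂μ)
        + ∫ x, u x ^ a * v x ^ b * ⟪∇ v x, ∇ φ x⟫_ℝ ∂μ := by
  have hv1 : ContDiff ℝ 1 v := hv.of_le one_le_two
  have h_integrable {ψ : E → ℝ} (hψ : Continuous ψ) (hψc : HasCompactSupport ψ) (a b : ℝ) :
      Integrable (fun x => u x ^ a * v x ^ b * ψ x) μ :=
    integrable_rpow_mul_rpow_mul a b hu.continuous hv.continuous hu0 hv0 hψ hψc
  have hDu := continuous_gradient hu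
  have hDv := continuous_gradient hv1
  have hinner_c : HasCompactSupport fun x => ⟪∇ v x, ∇ φ x⟫_ℝ :=
    (hasCompactSupport_gradient hφc).mono fun x hx h0 => hx (by simp only [h0, inner_zero_right])
  have hcross := h_integrable ((hDu.inner hDv).fun_mul hφ.continuous) hφc.mul_left (a - 1) b
  have hgrad := h_integrable ((hDv.norm.fun_pow 2).fun_mul hφ.continuous) hφc.mul_left a (b - 1)
  have htest := h_integrable (hDv.inner (continuous_gradient hφ)) hinner_c a b
  rw [← integral_inner_gradient_eq_integral_neg_laplacian_mul hv
      (((hu.rpow_const_of_ne hu0).mul (hv1.rpow_const_of_ne hv0)).mul hφ) hφc.mul_left,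
    ← integral_const_mul, ← integral_const_mul,
    ← integral_add (hcross.const_mul a) (hgrad.const_mul b),
    ← integral_add ?_ htest]
  · simp_rw [fun x => inner_gradient_rpow_mul_rpow_mul (∇ v x) a b (hu.differentiable one_ne_zero x)
      (hv1.differentiable one_ne_zero x) (hφ.differentiable one_ne_zero x) (hu0 x) (hv0 x),
      real_inner_self_eq_norm_sq, real_inner_comm (∇ u _)]
  · exact (hcross.const_mul a).add (hgrad.const_mul b)

theorem two_mul_integral_inner_gradient_le [IsFiniteMeasureOnCompacts μ] (r s θ : ℝ)
    (hu : ContDiff ℝ 1 u) (hv : ContDiff ℝ 1 v) (hu0 : ∀ x, 0 < u x) (hv0 : ∀ x, 0 < v x)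
    (hφ : Continuous φ) (hφc : HasCompactSupport φ) (hφ0 : ∀ x, 0 ≤ φ x) :
    2 * θ * (∫ x, u x ^ (r + 1) * v x ^ (s - 1) * (⟪∇ u x, ∇ v x⟫_ℝ * φ x) ∂μ)
      ≤ (∫ x, u x ^ r * v x ^ s * (‖∇ u x‖ ^ 2 * φ x) ∂μ)
        + θ ^ 2 * (∫ x, u x ^ (r + 2) * v x ^ (s - 2) * (‖∇ v x‖ ^ 2 * φ x) ∂μ) := by
  have h_integrable {h : E → ℝ} (hh : Continuous h) (a b : ℝ) :
      Integrable (fun x => u x ^ a * v x ^ b * (h x * φ x)) μ :=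
    integrable_rpow_mul_rpow_mul a b hu.continuous hv.continuous (fun x => (hu0 x).ne')
      (fun x => (hv0 x).ne') (hh.mul hφ) hφc.mul_left
  have hDu := continuous_gradient hu
  have hDv := continuous_gradient hv
  have hcross := (h_integrable (hDu.inner hDv) (r + 1) (s - 1)).const_mul (2 * θ)
  have hgrad_u := h_integrable (hDu.norm.fun_pow 2) r s
  have hgrad_v := (h_integrable (hDv.norm.fun_pow 2) (r + 2) (s - 2)).const_mul (θ ^ 2)
  rw [← integral_const_mul, ← integral_const_mul, ← integral_add hgrad_u hgrad_v]
  refine integral_mono hcross (hgrad_u.add hgrad_v) fun x => ?_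
  have hx := mul_le_mul_of_nonneg_right
    (two_mul_rpow_mul_rpow_mul_inner_le (hu0 x) (hv0 x) r s θ (∇ u x) (∇ v x)) (hφ0 x)
  dsimp only [Pi.add_apply]
  linarith

theorem estimates_picone_general [μ.IsAddHaarMeasure] {r : ℝ} (s θ : ℝ) (hr : r ≠ -2)
    (hu : ContDiff ℝ 1 u) (hv : ContDiff ℝ 2 v) (hu0 : ∀ x, 0 < u x) (hv0 : ∀ x, 0 < v x)
    (hφ : ContDiff ℝ 1 φ) (hφc : HasCompactSupport φ) (hφ0 : ∀ x, 0 ≤ φ x) :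
    (∫ x, u x ^ r * v x ^ s * ‖∇ u x‖ ^ 2 * φ x ∂μ)
    ≥ (2 * θ / (r + 2)) * (∫ x, u x ^ (r + 2) * -Δ v x * v x ^ (s - 1) * φ x ∂μ)
      - (2 * θ / (r + 2)) * (θ + s + θ * r / 2 - 1) *
        (∫ x, u x ^ (r + 2) * v x ^ (s - 2) * ‖∇ v x‖ ^ 2 * φ x ∂μ)
      + (-(2 * θ / (r + 2)) *
          (∫ x, u x ^ (r + 2) * v x ^ (s - 1) * ⟪∇ v x, ∇ φ x⟫_ℝ ∂μ)) := by
  have hr2 : r + 2 ≠ 0 := fun h => hr (eq_neg_of_add_eq_zero_left h)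
  have hgreen := integral_neg_laplacian_mul_rpow_mul_rpow_mul (μ := μ) (r + 2) (s - 1) hu hv
    (fun x => (hu0 x).ne') (fun x => (hv0 x).ne') hφ hφc
  have hsquare := two_mul_integral_inner_gradient_le (μ := μ) r s θ hu (hv.of_le one_le_two)
    hu0 hv0 hφ.continuous hφc hφ0
  rw [show r + 2 - 1 = r + 1 by ring, show s - 1 - 1 = s - 2 by ring] at hgreen
  simp only [mul_left_comm (-Δ v _), mul_assoc] at hgreen hsquare ⊢
  rw [ge_iff_le, hgreen]
  calc
    _ = 2 * θ * (∫ x, u x ^ (r + 1) * (v x ^ (s - 1) * (⟪∇ u x, ∇ v x⟫_ℝ * φ x)) ∂μ)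
        - θ ^ 2 * (∫ x, u x ^ (r + 2) * (v x ^ (s - 2) * (‖∇ v x‖ ^ 2 * φ x)) ∂μ) := by
      field_simp
      ring
    _ ≤ ∫ x, u x ^ r * (v x ^ s * (‖∇ u x‖ ^ 2 * φ x)) ∂μ := by
      linarith only [hsquare]

end Picone

theorem estimates_picone (n : ℕ) (p q r s θ : ℝ) (hp : 0 < p) (hq : 0 < q)
    (hr : r ≠ -2)
    (u v : EuclideanSpace ℝ (Fin n) → ℝ)
    (hu : ContDiff ℝ 2 u) (hv : ContDiff ℝ 2 v)
    (hu0 : ∀ x, 0 < u x) (hv0 : ∀ x, 0 < v x)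
    (hue : ∀ x, -lap u x = v x ^ p) (hve : ∀ x, -lap v x = u x ^ q)
    (φ : EuclideanSpace ℝ (Fin n) → ℝ) (hφ : ContDiff ℝ 2 φ)
    (hφc : HasCompactSupport φ) (hφ0 : ∀ x, 0 ≤ φ x) :
    (∫ x, u x ^ r * v x ^ s * ‖gradient u x‖ ^ 2 * φ x)
    ≥ (2 * θ / (r + 2)) * (∫ x, u x ^ (r + q + 2) * v x ^ (s - 1) * φ x)
      - (2 * θ / (r + 2)) * (θ + s + θ * r / 2 - 1) *
        (∫ x, u x ^ (r + 2) * v x ^ (s - 2) * ‖gradient v x‖ ^ 2 * φ x)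
      + (-(2 * θ / (r + 2)) *
          (∫ x, u x ^ (r + 2) * v x ^ (s - 1) *
            ⟪gradient v x, gradient φ x⟫_ℝ)) := by
  simpa only [← lap_eq_laplacian ((hv.fderiv_right le_rfl).differentiable one_ne_zero _), hve,
    add_right_comm r q 2, rpow_add (hu0 _) (r + 2) q] using estimates_picone_general (μ := volume)
      s θ hr (hu.of_le one_le_two) hv hu0 hv0 (hφ.of_le one_le_two) hφc hφ0
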